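/- Let n ≥ 4 and let < be a linear order on the set of objects O. The designator rule D : D_<^n → M satisfies equity under bipartite acclaim: at every profile P of single-peaked preferences at which agents i and j are the acclaimed pair, D_i(P) = o_j or D_j(P) = o_i. Moreover, if o_i < o_j then D_i(P) = o_j. -/

import Mathlib

/-! Let `i` and `j` be the acclaimed pair with `i` to the left of `j`. The statement is symmetric in
the pair, so it suffices that `i` receives object `j`.

Throughout Stage II one of three situations (`DesInv`) holds: `i` holds an object in `[i, j)` while
`j`, and nobody else, holds object `j`; or `i` alone holds `j`; or `i` has left with `j`. Only the invariance
needs an argument. In the first situation single-peakedness forces the best remaining object of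
agent `j`, whose peak among active objects is `i`, to lie weakly below the object held by `i`
(`best_le_of_peak`). Hence `j` is a candidate to leave. If somebody holding an object below `j`
leaves instead, the agents holding larger objects keep them and nobody moves beyond that object
(`desStep_held`). If `j` leaves, the designating condition is met, because `τ(j) = i`, and `i`
inherits object `j` (`desStep_designate`). In the second situation `i` is a candidate, so either
she leaves with `j`, or someone holding a smaller object leaves and she is unaffected.
As long as `i` remains, some agent leaves at every step, so `n` steps suffice for `i` to leave. -/

/-- A preference is a strict linear order on the objects `Fin n`, encoded by its
rank function: `p o < p o'` means object `o` is strictly preferred to `o'`. -/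
abbrev Pref (n : ℕ) := Fin n ≃ Fin n

/-- `o` is strictly preferred to `o'` under `p`. -/
def prefers {n : ℕ} (p : Pref n) (o o' : Fin n) : Prop := p o < p o'

/-- `o` is weakly preferred to `o'` under `p` (i.e. `o P o'` or `o = o'`). -/
def weakPref {n : ℕ} (p : Pref n) (o o' : Fin n) : Prop := p o ≤ p o'

/-- The top-ranked object `r_1(p)`. -/
def topObj {n : ℕ} [NeZero n] (p : Pref n) : Fin n := p.symm 0

/-- The second-ranked object `r_2(p)`. -/
def secondObj {n : ℕ} [NeZero n] (p : Pref n) : Fin n := p.symm 1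

/-- The `p`-best object of a (nonempty) finite set `S`: `max^p S`. -/
noncomputable def best {n : ℕ} [NeZero n] (p : Pref n) (S : Finset (Fin n)) : Fin n :=
  (S.toList.argmin (fun o => p o)).getD 0

/-- A profile belongs to the domain `D` coordinatewise. -/
def inD {n : ℕ} (D : Set (Pref n)) (P : Fin n → Pref n) : Prop := ∀ i, P i ∈ D

/-- Individual rationality of an allocation at a profile: each agent `i` weakly
prefers her assigned object to her endowment `o_i = i`. -/
def IRAt {n : ℕ} (P : Fin n → Pref n) (m : Fin n → Fin n) : Prop :=
  ∀ i, weakPref (P i) (m i) i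

/-- `m'` Pareto dominates `m` at profile `P`. -/
def ParetoDom {n : ℕ} (P : Fin n → Pref n) (m' m : Fin n → Fin n) : Prop :=
  (∀ i, weakPref (P i) (m' i) (m i)) ∧ ∃ j, prefers (P j) (m' j) (m j)

/-- Pareto efficiency of an allocation at a profile. -/
def EffAt {n : ℕ} (P : Fin n → Pref n) (m : Fin n → Fin n) : Prop :=
  ¬ ∃ m' : Fin n → Fin n, Function.Bijective m' ∧ ParetoDom P m' m

/-- A rule maps profiles from the domain to allocations (bijections `N → O`). -/
def IsRule {n : ℕ} (D : Set (Pref n)) (f : (Fin n → Pref n) → (Fin n → Fin n)) : Prop :=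
  ∀ P, inD D P → Function.Bijective (f P)

def Efficient {n : ℕ} (D : Set (Pref n)) (f : (Fin n → Pref n) → (Fin n → Fin n)) : Prop :=
  ∀ P, inD D P → EffAt P (f P)

def IndRational {n : ℕ} (D : Set (Pref n)) (f : (Fin n → Pref n) → (Fin n → Fin n)) : Prop :=
  ∀ P, inD D P → IRAt P (f P)

def StrategyProof {n : ℕ} (D : Set (Pref n)) (f : (Fin n → Pref n) → (Fin n → Fin n)) : Prop :=
  ∀ P, inD D P → ∀ i, ∀ p' ∈ D, weakPref (P i) (f P i) (f (Function.update P i p') i)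

/-- The active agents at profile `P` (those whose top object differs from their
endowment); since `o_i = i`, the set of active objects coincides with it. -/
def activeAgents {n : ℕ} [NeZero n] (P : Fin n → Pref n) : Finset (Fin n) :=
  Finset.univ.filter (fun i => topObj (P i) ≠ i)

/-- Agent `i` is the acclaimed agent at profile `P`. -/
def acclaimed {n : ℕ} [NeZero n] (P : Fin n → Pref n) (i : Fin n) : Prop :=
  2 < (activeAgents P).card ∧ i ∈ activeAgents P ∧
    best (P i) (activeAgents P) ≠ i ∧
    ∀ j ∈ activeAgents P, j ≠ i → best (P j) (activeAgents P) = i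

/-- Equity under unanimous acclaim. -/
def EquityUA {n : ℕ} [NeZero n] (D : Set (Pref n))
    (f : (Fin n → Pref n) → (Fin n → Fin n)) : Prop :=
  ∀ P, inD D P → ∀ i, acclaimed P i → f P i = best (P i) (activeAgents P)

/-- Agents `i` and `j` form the acclaimed pair at profile `P`. -/
def acclaimedPair {n : ℕ} [NeZero n] (P : Fin n → Pref n) (i j : Fin n) : Prop :=
  ∃ Ni Nj : Finset (Fin n),
    Disjoint Ni Nj ∧ Ni ∪ Nj = activeAgents P ∧ Ni.card = Nj.card ∧ 1 < Ni.card ∧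
    i ∈ Nj ∧ j ∈ Ni ∧
    (∀ l ∈ Ni, best (P l) (activeAgents P) = i) ∧
    (∀ l ∈ Nj, best (P l) (activeAgents P) = j)

/-- Equity under bipartite acclaim. -/
def EquityBA {n : ℕ} [NeZero n] (D : Set (Pref n))
    (f : (Fin n → Pref n) → (Fin n → Fin n)) : Prop :=
  ∀ P, inD D P → ∀ i j, acclaimedPair P i j → f P i = j ∨ f P j = i

/-- Equity⁺ under bipartite acclaim. -/
def EquityPlusBA {n : ℕ} [NeZero n] (D : Set (Pref n))
    (f : (Fin n → Pref n) → (Fin n → Fin n)) : Prop :=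
  ∀ P, inD D P → ∀ i j, acclaimedPair P i j → f P i = j ∧ f P j = i

/-- Single-peakedness of `p` w.r.t. the linear order on objects encoded by the
position permutation `σ` (`o < o'` iff `σ o < σ o'`). -/
def singlePeaked {n : ℕ} [NeZero n] (σ : Fin n ≃ Fin n) (p : Pref n) : Prop :=
  ∀ o o' : Fin n,
    ((σ o' < σ o ∧ σ o < σ (topObj p)) ∨ (σ (topObj p) < σ o ∧ σ o < σ o')) →
    prefers p o o'

/-- The full single-peaked domain `D_<`. -/
def spDomain {n : ℕ} [NeZero n] (σ : Fin n ≃ Fin n) : Set (Pref n) :=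
  {p | singlePeaked σ p}

/-- `D` is a single-peaked domain. -/
def IsSPDomain {n : ℕ} [NeZero n] (D : Set (Pref n)) : Prop :=
  ∃ σ : Fin n ≃ Fin n, D ⊆ spDomain σ

/-- Objects `o` and `o'` are connected in `D`: `o ∼ o'`. -/
def connectedObj {n : ℕ} [NeZero n] (D : Set (Pref n)) (o o' : Fin n) : Prop :=
  ∃ p ∈ D, ∃ p' ∈ D, topObj p = o ∧ secondObj p = o' ∧ topObj p' = o' ∧ secondObj p' = o

/-- `D` is path-connected. -/
def pathConnected {n : ℕ} [NeZero n] (D : Set (Pref n)) : Prop :=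
  ∀ o o' : Fin n, o ≠ o' → ∃ l : List (Fin n),
    l.Nodup ∧ l.head? = some o ∧ l.getLast? = some o' ∧ l.Chain' (connectedObj D)

/-- `p` and `p'` rank all objects in exactly opposite orders. -/
def reversedPair {n : ℕ} (p p' : Pref n) : Prop :=
  ∀ o o', prefers p o o' ↔ prefers p' o' o

/-- A rich domain: path-connected and containing two completely reversed preferences. -/
def richDomain {n : ℕ} [NeZero n] (D : Set (Pref n)) : Prop :=
  pathConnected D ∧ ∃ p ∈ D, ∃ p' ∈ D, reversedPair p p'

/-- The restriction `→(x,y,z) ∈ R(D)`: whenever `x` is the best of `{x,y,z}`,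
`y` is ranked above `z`. -/
def RestrR {n : ℕ} [NeZero n] (D : Set (Pref n)) (x y z : Fin n) : Prop :=
  ∀ p ∈ D, best p {x, y, z} = x → prefers p y z

/-- The ternary relation `(x,y,z) ∈ B(D)`. -/
def RelB {n : ℕ} [NeZero n] (D : Set (Pref n)) (x y z : Fin n) : Prop :=
  RestrR D x y z ∧ RestrR D z y x

/-! ### Extensive game forms and obvious strategy-proofness -/

/-- An extensive game form: a finite rooted tree of histories (lists of actions,
prefix-closed), a player function and an outcome function on terminal histories. -/
structure GameForm (n : ℕ) where
  hist : Finset (List ℕ)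
  root_mem : [] ∈ hist
  prefix_closed : ∀ h a, h ++ [a] ∈ hist → h ∈ hist
  player : List ℕ → Fin n
  outcome : List ℕ → (Fin n → Fin n)

/-- A strategy chooses an action at every history. -/
abbrev Strategy : Type := List ℕ → ℕ

/-- Terminal histories of the game form. -/
def GameForm.Terminal {n : ℕ} (Γ : GameForm n) (h : List ℕ) : Prop :=
  h ∈ Γ.hist ∧ ∀ a, h ++ [a] ∉ Γ.hist

/-- A strategy of agent `i` is valid if it always chooses a feasible action. -/
def GameForm.ValidStrat {n : ℕ} (Γ : GameForm n) (i : Fin n) (s : Strategy) : Prop :=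
  ∀ h ∈ Γ.hist, ¬ Γ.Terminal h → Γ.player h = i → h ++ [s h] ∈ Γ.hist

/-- Play from `h` under the strategy profile `s` reaches history `h'`. -/
inductive GameForm.Reaches {n : ℕ} (Γ : GameForm n) (s : Fin n → Strategy) :
    List ℕ → List ℕ → Prop
  | refl (h : List ℕ) : GameForm.Reaches Γ s h h
  | step {h h' : List ℕ} : GameForm.Reaches Γ s h h' → h' ∈ Γ.hist → ¬ Γ.Terminal h' →
      GameForm.Reaches Γ s h (h' ++ [s (Γ.player h') h'])

/-- `o` belongs to the feasible set `X_i(h, s_i)` of agent `i` at history `h`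
given her strategy `si`. -/
def GameForm.Feas {n : ℕ} (Γ : GameForm n) (i : Fin n) (h : List ℕ) (si : Strategy)
    (o : Fin n) : Prop :=
  ∃ s : Fin n → Strategy, (∀ j, Γ.ValidStrat j (s j)) ∧ s i = si ∧
    ∃ t, Γ.Reaches s h t ∧ Γ.Terminal t ∧ Γ.outcome t i = o

/-- `h` is a decision node of `i` reachable (on-path) when `i` plays `si`. -/
def GameForm.ReachableNode {n : ℕ} (Γ : GameForm n) (i : Fin n) (si : Strategy)
    (h : List ℕ) : Prop :=
  h ∈ Γ.hist ∧ ¬ Γ.Terminal h ∧ Γ.player h = i ∧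
    ∃ s : Fin n → Strategy, (∀ j, Γ.ValidStrat j (s j)) ∧ s i = si ∧ Γ.Reaches s [] h

/-- `si` obviously dominates `si'` at preference `p`: at every earliest point of
departure, the worst feasible outcome under `si` is weakly preferred to the best
feasible outcome under `si'`. -/
def GameForm.ObvDom {n : ℕ} (Γ : GameForm n) (i : Fin n) (p : Pref n)
    (si si' : Strategy) : Prop :=
  ∀ h, Γ.ReachableNode i si h → Γ.ReachableNode i si' h → si h ≠ si' h →
    ∀ o o', Γ.Feas i h si o → Γ.Feas i h si' o' → weakPref p o o'

/-- Obvious strategy-proofness of a rule `f` on domain `D`. -/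
def OSP {n : ℕ} (D : Set (Pref n)) (f : (Fin n → Pref n) → (Fin n → Fin n)) : Prop :=
  ∃ (Γ : GameForm n) (S : Fin n → Pref n → Strategy),
    (∀ i p, p ∈ D → Γ.ValidStrat i (S i p)) ∧
    (∀ i p, p ∈ D → ∀ s', Γ.ValidStrat i s' → Γ.ObvDom i p (S i p) s') ∧
    (∀ P : Fin n → Pref n, inD D P →
      ∃ t, Γ.Reaches (fun j => S j (P j)) [] t ∧ Γ.Terminal t ∧ Γ.outcome t = f P)

/-! ### The crawler, the designator, and top trading cycles -/

/-- The running state of the crawler/designator algorithms: the sub-allocation of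
objects currently held by remaining agents, and the final assignments so far. -/
structure AlgState (n : ℕ) where
  held : Fin n → Option (Fin n)
  res : Fin n → Option (Fin n)

/-- The object currently held by agent `i`. -/
def heldObj {n : ℕ} [NeZero n] (st : AlgState n) (i : Fin n) : Fin n := (st.held i).getD 0

/-- The remaining agents. -/
def remAgents {n : ℕ} (st : AlgState n) : Finset (Fin n) :=
  Finset.univ.filter (fun i => (st.held i).isSome)

/-- The remaining objects. -/
def remObjs {n : ℕ} [NeZero n] (st : AlgState n) : Finset (Fin n) :=
  (remAgents st).image (heldObj st)

/-- The object of `S` adjacently larger than `o` w.r.t. the order `σ`. -/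
noncomputable def adjLarger {n : ℕ} (σ : Fin n ≃ Fin n) (S : Finset (Fin n)) (o : Fin n) : Fin n :=
  ((S.filter (fun o' => σ o < σ o')).toList.argmin (fun o' => σ o')).getD o

/-- The agent `i^s` leaving at the current step: the remaining agent holding the
`σ`-smallest object among those whose best remaining object is weakly below their
held object. -/
noncomputable def leaver {n : ℕ} [NeZero n] (σ : Fin n ≃ Fin n) (P : Fin n → Pref n)
    (st : AlgState n) : Option (Fin n) :=
  ((remAgents st).filter
      (fun i => σ (best (P i) (remObjs st)) ≤ σ (heldObj st i))).toList.argmin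
    (fun i => σ (heldObj st i))

/-- One step of the crawler: the leaving agent takes her best remaining object,
and every remaining agent holding an object weakly above the taken object and
strictly below the leaver's object crawls to the adjacently larger object. -/
noncomputable def crawlerStep {n : ℕ} [NeZero n] (σ : Fin n ≃ Fin n) (P : Fin n → Pref n)
    (st : AlgState n) : AlgState n :=
  match leaver σ P st with
  | none => st
  | some is =>
    let taken := best (P is) (remObjs st)
    { held := fun j =>
        if j = is then none
        else if (st.held j).isSome = true ∧ σ taken ≤ σ (heldObj st j) ∧
            σ (heldObj st j) < σ (heldObj st is) then
          some (adjLarger σ (remObjs st) (heldObj st j))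
        else st.held j,
      res := Function.update st.res is (some taken) }

/-- Initially every agent holds her endowment `o_i = i`. -/
def crawlerInit (n : ℕ) : AlgState n := ⟨fun i => some i, fun _ => none⟩

/-- The crawler rule w.r.t. the object order `σ`. -/
noncomputable def crawler {n : ℕ} [NeZero n] (σ : Fin n ≃ Fin n) (P : Fin n → Pref n) :
    Fin n → Fin n :=
  fun i => (((crawlerStep σ P)^[n] (crawlerInit n)).res i).getD 0

/-- `τ(i)`: the active agent whose endowment is `max^{P_i} O_{m̄⁰}`. -/
noncomputable def desTau {n : ℕ} [NeZero n] (P : Fin n → Pref n) (i : Fin n) : Fin n :=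
  best (P i) (activeAgents P)

/-- Stage I of the designator: null agents receive their endowments and leave. -/
def desInit {n : ℕ} [NeZero n] (P : Fin n → Pref n) : AlgState n :=
  { held := fun i => if topObj (P i) = i then none else some i,
    res := fun i => if topObj (P i) = i then some i else none }

/-- One step of Stage II of the designator: the leaving agent `i^s` takes her best
remaining object; if `τ(i^s)` is remaining and holds an object weakly above the
taken object and strictly below `i^s`'s held object, then `τ(i^s)` directly
inherits `i^s`'s object and only agents below `τ(i^s)` crawl (designating);
otherwise the crawling updating applies. -/
noncomputable def desStep {n : ℕ} [NeZero n] (σ : Fin n ≃ Fin n) (P : Fin n → Pref n)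
    (st : AlgState n) : AlgState n :=
  match leaver σ P st with
  | none => st
  | some is =>
    let taken := best (P is) (remObjs st)
    let t := desTau P is
    if (st.held t).isSome = true ∧ σ taken ≤ σ (heldObj st t) ∧
        σ (heldObj st t) < σ (heldObj st is) then
      { held := fun j =>
          if j = is then none
          else if j = t then some (heldObj st is)
          else if (st.held j).isSome = true ∧ σ taken ≤ σ (heldObj st j) ∧
              σ (heldObj st j) < σ (heldObj st t) then
            some (adjLarger σ (remObjs st) (heldObj st j))
          else st.held j,
        res := Function.update st.res is (some taken) }
    else
      { held := fun j =>
          if j = is then none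
          else if (st.held j).isSome = true ∧ σ taken ≤ σ (heldObj st j) ∧
              σ (heldObj st j) < σ (heldObj st is) then
            some (adjLarger σ (remObjs st) (heldObj st j))
          else st.held j,
        res := Function.update st.res is (some taken) }

/-- The designator rule w.r.t. the object order `σ`. -/
noncomputable def designator {n : ℕ} [NeZero n] (σ : Fin n ≃ Fin n) (P : Fin n → Pref n) :
    Fin n → Fin n :=
  fun i => (((desStep σ P)^[n] (desInit P)).res i).getD 0

/-- One round of top trading cycles: every remaining agent points to the owner of
her favorite remaining object (owner of object `o` is agent `o`), and every agent
lying on a pointing cycle receives the object she points to and leaves. -/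
noncomputable def ttcStep {n : ℕ} [NeZero n] (P : Fin n → Pref n) (res : Fin n → Option (Fin n)) :
    Fin n → Option (Fin n) :=
  let rem : Finset (Fin n) := Finset.univ.filter (fun i => res i = none)
  let pt : Fin n → Fin n := fun i => best (P i) rem
  fun i =>
    match res i with
    | some o => some o
    | none =>
      if (List.range (n + 1)).any (fun k => (k != 0) && (pt^[k] i == i)) then some (pt i)
      else none

/-- The top-trading-cycle rule. -/
noncomputable def ttc {n : ℕ} [NeZero n] (P : Fin n → Pref n) : Fin n → Fin n :=
  fun i => (((ttcStep P)^[n] (fun _ => none)) i).getD 0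

/-! ### Best and adjacent objects -/


section Argmin

variable {n : ℕ} [NeZero n]

theorem best_spec (p : Pref n) {S : Finset (Fin n)} {o : Fin n} (ho : o ∈ S) :
    best p S ∈ S ∧ ∀ x ∈ S, p (best p S) ≤ p x := by
  unfold best
  rcases h : S.toList.argmin (fun o => p o) with _ | m
  · rw [List.argmin_eq_none, Finset.toList_eq_nil] at h
    simp [h] at ho
  · refine ⟨by simpa using List.argmin_mem h, fun x hx => ?_⟩
    exact List.le_of_mem_argmin (f := fun o => p o) (Finset.mem_toList.2 hx) h

theorem adjLarger_spec (σ : Fin n ≃ Fin n) {S : Finset (Fin n)} {o h : Fin n} (hh : h ∈ S)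
    (hlt : σ o < σ h) :
    adjLarger σ S o ∈ S ∧ σ o < σ (adjLarger σ S o) ∧ σ (adjLarger σ S o) ≤ σ h := by
  unfold adjLarger
  have hm : h ∈ (S.filter (fun o' => σ o < σ o')).toList := by simp [hh, hlt]
  rcases e : (S.filter (fun o' => σ o < σ o')).toList.argmin (fun o' => σ o') with _ | m
  · rw [List.argmin_eq_none] at e
    simp [e] at hm
  · have h1 := List.argmin_mem e
    simp only [Finset.mem_toList, Finset.mem_filter] at h1
    exact ⟨h1.1, h1.2, List.le_of_mem_argmin (f := fun o' => σ o') hm e⟩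

/-- If `a` is the best object of `A` for a single-peaked preference, then the best object of a
subset of `A` never lies beyond any of its elements `x` to the right of `a`. -/
theorem best_le_of_peak {σ : Fin n ≃ Fin n} {p : Pref n} (hp : singlePeaked σ p)
    {A R : Finset (Fin n)} {a x : Fin n} (hRA : R ⊆ A) (ha : best p A = a)
    (hx : x ∈ R) (hax : σ a ≤ σ x) : σ (best p R) ≤ σ x := by
  by_contra! hlt
  have hR := best_spec p hx
  have hA := (best_spec p (hRA hx)).2
  rw [ha] at hA
  have hne : x ≠ best p R := fun e => by rw [← e] at hlt; exact lt_irrefl _ hlt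
  have hlt' : p (best p R) < p x :=
    lt_of_le_of_ne (hR.2 x hx) fun e => hne (p.injective e).symm
  rcases hax.eq_or_lt with e | hax'
  · have e' := σ.injective e
    subst e'
    exact absurd (hA _ (hRA hR.1)) (not_le.2 hlt')
  · rcases lt_trichotomy (σ (topObj p)) (σ x) with h | h | h
    · exact lt_asymm hlt' (hp x _ (Or.inr ⟨h, hlt⟩))
    · have h' := σ.injective h
      have h0 : p x = 0 := by rw [← h']; simp [topObj]
      rw [h0] at hlt'
      exact absurd hlt' (Fin.not_lt_zero _)
    · exact absurd (hp x a (Or.inl ⟨hax', h⟩)) (not_lt.2 (hA x (hRA hx)))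

theorem best_eq_of_mem {p : Pref n} {A R : Finset (Fin n)} {b : Fin n} (hRA : R ⊆ A)
    (hb : best p A = b) (hbR : b ∈ R) : best p R = b := by
  have hR := best_spec p hbR
  have h2 := (best_spec p (hRA hbR)).2 _ (hRA hR.1)
  rw [hb] at h2
  exact p.injective (le_antisymm (hR.2 b hbR) h2)

end Argmin

/-! ### One step of Stage II -/

section Step

variable {n : ℕ} [NeZero n] {σ : Fin n ≃ Fin n} {P : Fin n → Pref n} {st : AlgState n}

theorem heldObj_eq {k o : Fin n} (h : st.held k = some o) : heldObj st k = o := by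
  simp [heldObj, h]

theorem mem_remAgents {k : Fin n} : k ∈ remAgents st ↔ ∃ o, st.held k = some o := by
  simp [remAgents, Option.isSome_iff_exists]

theorem mem_remObjs {o : Fin n} : o ∈ remObjs st ↔ ∃ k, st.held k = some o := by
  simp only [remObjs, Finset.mem_image, mem_remAgents]
  constructor
  · rintro ⟨k, ⟨o', h⟩, rfl⟩
    exact ⟨k, by rw [heldObj_eq h, h]⟩
  · rintro ⟨k, h⟩
    exact ⟨k, ⟨o, h⟩, heldObj_eq h⟩

theorem leaver_spec {l : Fin n} (hl : leaver σ P st = some l) :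
    ∃ h, st.held l = some h ∧ ∀ k o, st.held k = some o →
      σ (best (P k) (remObjs st)) ≤ σ o → σ h ≤ σ o := by
  have hm := List.argmin_mem hl
  simp only [Finset.mem_toList, Finset.mem_filter, mem_remAgents] at hm
  obtain ⟨⟨h, hh⟩, -⟩ := hm
  refine ⟨h, hh, fun k o hk hb => ?_⟩
  have := List.le_of_mem_argmin (f := fun i => σ (heldObj st i)) (a := k)
    (by simp [mem_remAgents, hk, heldObj_eq hk, hb]) hl
  simpa [heldObj_eq hk, heldObj_eq hh] using this

theorem exists_leaver {k o : Fin n} (hk : st.held k = some o)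
    (hb : σ (best (P k) (remObjs st)) ≤ σ o) : ∃ l, leaver σ P st = some l := by
  rcases e : leaver σ P st with _ | l
  · rw [leaver, List.argmin_eq_none] at e
    have : k ∈ ((remAgents st).filter
      (fun i => σ (best (P i) (remObjs st)) ≤ σ (heldObj st i))).toList := by
      simp [mem_remAgents, hk, heldObj_eq hk, hb]
    simp [e] at this
  · exact ⟨l, rfl⟩

theorem desStep_res {l : Fin n} (hl : leaver σ P st = some l) :
    (desStep σ P st).res = Function.update st.res l (some (best (P l) (remObjs st))) := by
  simp only [desStep, hl]
  split_ifs <;> rfl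

theorem desStep_held_leaver {l : Fin n} (hl : leaver σ P st = some l) :
    (desStep σ P st).held l = none := by
  simp only [desStep, hl]
  split_ifs <;> simp

theorem desStep_held_none {k : Fin n} (hk : st.held k = none) :
    (desStep σ P st).held k = none := by
  rcases hl : leaver σ P st with _ | l
  · simpa only [desStep, hl] using hk
  · simp only [desStep, hl]
    split_ifs with hc
    · have hkt : k ≠ desTau P l := by
        rintro rfl
        simp [hk] at hc
      simp [hk, hkt]
    · simp [hk]

/-- An agent who stays either keeps her object, or moves up to an object that is not beyond the
one given up by the leaver. -/
theorem desStep_held {l h k o : Fin n} (hl : leaver σ P st = some l) (hh : st.held l = some h)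
    (hkl : k ≠ l) (hk : st.held k = some o) :
    ∃ o', (desStep σ P st).held k = some o' ∧ o' ∈ remObjs st ∧
      (o' = o ∨ (σ o < σ o' ∧ σ o' ≤ σ h)) := by
  have hmo : o ∈ remObjs st := mem_remObjs.2 ⟨k, hk⟩
  have hmh : h ∈ remObjs st := mem_remObjs.2 ⟨l, hh⟩
  simp only [desStep, hl]
  split_ifs with hc
  · obtain ⟨h1, -, h3⟩ := hc
    rw [heldObj_eq hh] at h3
    by_cases hkt : k = desTau P l
    · refine ⟨h, by simp [hkt ▸ hkl, hkt, heldObj_eq hh], hmh, Or.inr ⟨?_, le_rfl⟩⟩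
      rwa [← hkt, heldObj_eq hk] at h3
    · simp only [hkl, hkt, if_false]
      split_ifs with hd
      · rw [heldObj_eq hk] at hd ⊢
        have := adjLarger_spec σ hmh (hd.2.2.trans h3)
        exact ⟨_, rfl, this.1, Or.inr this.2⟩
      · exact ⟨o, hk, hmo, Or.inl rfl⟩
  · simp only [hkl, if_false]
    split_ifs with hd
    · rw [heldObj_eq hk, heldObj_eq hh] at hd
      rw [heldObj_eq hk]
      have := adjLarger_spec σ hmh hd.2.2
      exact ⟨_, rfl, this.1, Or.inr this.2⟩
    · exact ⟨o, hk, hmo, Or.inl rfl⟩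

/-- A designating step: the designated agent inherits, and whoever else moves up does so only
within the objects up to the one given up by the designated agent. -/
theorem desStep_designate {l h t x : Fin n} (hl : leaver σ P st = some l)
    (hh : st.held l = some h) (ht : desTau P l = t) (hx : st.held t = some x)
    (h1 : σ (best (P l) (remObjs st)) ≤ σ x) (h2 : σ x < σ h) :
    (desStep σ P st).held t = some h ∧
      ∀ k o, k ≠ t → (desStep σ P st).held k = some o →
        (st.held k = some o ∧ k ≠ l) ∨ σ o ≤ σ x := by
  have hc : (st.held (desTau P l)).isSome = true ∧
      σ (best (P l) (remObjs st)) ≤ σ (heldObj st (desTau P l)) ∧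
      σ (heldObj st (desTau P l)) < σ (heldObj st l) := by
    rw [ht, heldObj_eq hx, heldObj_eq hh, hx]
    exact ⟨rfl, h1, h2⟩
  have htl : t ≠ l := by
    rintro rfl
    rw [hx] at hh
    cases hh
    exact lt_irrefl _ h2
  simp only [desStep, hl, hc, if_true, and_self]
  refine ⟨by simp [ht, htl, heldObj_eq hh], fun k o hkt hk => ?_⟩
  have hkt' : k ≠ desTau P l := ht ▸ hkt
  simp only [hkt', if_false] at hk
  split_ifs at hk with hkl hd
  · obtain ⟨-, -, h3⟩ := hd
    rw [ht, heldObj_eq hx] at h3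
    cases hk
    exact Or.inr (adjLarger_spec σ (mem_remObjs.2 ⟨t, hx⟩) h3).2.2
  · exact Or.inl ⟨hk, hkl⟩

theorem card_remAgents_desStep {l : Fin n} (hl : leaver σ P st = some l) :
    (remAgents (desStep σ P st)).card < (remAgents st).card := by
  apply Finset.card_lt_card
  rw [Finset.ssubset_iff_of_subset]
  · obtain ⟨h, hh, -⟩ := leaver_spec hl
    refine ⟨l, mem_remAgents.2 ⟨h, hh⟩, ?_⟩
    simp [mem_remAgents, desStep_held_leaver hl]
  · intro k hk
    rw [mem_remAgents] at hk ⊢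
    by_contra! hne
    have := desStep_held_none (σ := σ) (P := P) (st := st) (Option.eq_none_iff_forall_ne_some.2 hne)
    simp [this] at hk

end Step

/-! ### The invariant of Stage II -/

section Invariant

variable {n : ℕ} [NeZero n] {σ : Fin n ≃ Fin n} {P : Fin n → Pref n} {st : AlgState n} {i j : Fin n}

/-- The three possible situations of the acclaimed pair during Stage II, for `i` to the left
of `j`: agent `i` holds an object in `[i, j)` and `j` alone holds object `j`, or `i` alone holds
`j`, or `i` has left with `j`. -/
def DesInv (σ : Fin n ≃ Fin n) (i j : Fin n) (st : AlgState n) : Prop :=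
  (∃ x, st.held i = some x ∧ σ i ≤ σ x ∧ σ x < σ j ∧ st.held j = some j ∧
    ∀ k, st.held k = some j → k = j) ∨
  (st.held i = some j ∧ ∀ k, st.held k = some j → k = i) ∨
  (st.held i = none ∧ st.res i = some j)

theorem remObjs_desStep_subset : remObjs (desStep σ P st) ⊆ remObjs st := by
  intro o ho
  obtain ⟨k, hk⟩ := mem_remObjs.1 ho
  rcases hl : leaver σ P st with _ | l
  · simp only [desStep, hl] at hk
    exact mem_remObjs.2 ⟨k, hk⟩
  · obtain ⟨h, hh, -⟩ := leaver_spec hl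
    have hkl : k ≠ l := by
      rintro rfl
      simp [desStep_held_leaver hl] at hk
    rcases e : st.held k with _ | o₀
    · simp [desStep_held_none e] at hk
    · obtain ⟨o', h1, h2, -⟩ := desStep_held hl hh hkl e
      rw [h1] at hk
      cases hk
      exact h2

/-- When the leaver holds an object below `b`, nobody newly obtains `b`. -/
theorem held_eq_of_desStep {l h k b : Fin n} (hl : leaver σ P st = some l)
    (hh : st.held l = some h) (hlt : σ h < σ b) (hk : (desStep σ P st).held k = some b) :
    st.held k = some b := by
  have hkl : k ≠ l := by
    rintro rfl
    simp [desStep_held_leaver hl] at hk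
  rcases e : st.held k with _ | o₀
  · simp [desStep_held_none e] at hk
  · obtain ⟨o', h1, -, h2⟩ := desStep_held hl hh hkl e
    rw [h1] at hk
    cases hk
    rcases h2 with rfl | ⟨-, h2⟩
    · rfl
    · exact absurd hlt (not_lt.2 h2)

/-- When the leaver holds an object below `b`, the holder of `b` keeps it. -/
theorem desStep_held_of_lt {l h k b : Fin n} (hl : leaver σ P st = some l)
    (hh : st.held l = some h) (hlt : σ h < σ b) (hk : st.held k = some b) :
    (desStep σ P st).held k = some b := by
  have hkl : k ≠ l := by
    rintro rfl
    rw [hh] at hk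
    cases hk
    exact lt_irrefl _ hlt
  obtain ⟨o', h1, -, rfl | ⟨h2, h3⟩⟩ := desStep_held hl hh hkl hk
  · exact h1
  · exact absurd (h2.trans_le h3) (lt_asymm hlt)

/-- The invariant persists, and as long as agent `i` remains it yields an agent who leaves: `j` is
a candidate in the first situation and `i` in the second. -/
theorem desInv_desStep (hP : singlePeaked σ (P j)) (hA : remObjs st ⊆ activeAgents P)
    (hi : best (P i) (activeAgents P) = j) (hj : best (P j) (activeAgents P) = i)
    (hst : DesInv σ i j st) :
    DesInv σ i j (desStep σ P st) ∧
      (st.held i = none ∨ ∃ l, leaver σ P st = some l) := by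
  rcases hst with ⟨x, hx, hix, hxj, hjj, huniq⟩ | ⟨hij, huniq⟩ | ⟨hnone, hres⟩
  · have hmx : x ∈ remObjs st := mem_remObjs.2 ⟨i, hx⟩
    have hbj : σ (best (P j) (remObjs st)) ≤ σ x := best_le_of_peak hP hA hj hmx hix
    obtain ⟨l, hl⟩ := exists_leaver hjj (hbj.trans hxj.le)
    refine ⟨?_, Or.inr ⟨l, hl⟩⟩
    obtain ⟨h, hh, hmin⟩ := leaver_spec hl
    rcases (hmin j j hjj (hbj.trans hxj.le)).lt_or_eq with hlt | heq
    · have hjj' := desStep_held_of_lt hl hh hlt hjj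
      left
      -- Agent `i` is no candidate: her best remaining object `j` lies beyond the object she holds.
      have hil : i ≠ l := by
        rintro rfl
        have hm := List.argmin_mem hl
        simp only [Finset.mem_toList, Finset.mem_filter, heldObj_eq hx] at hm
        rw [best_eq_of_mem hA hi (mem_remObjs.2 ⟨j, hjj⟩)] at hm
        exact absurd hxj (not_lt.2 hm.2)
      obtain ⟨o', h1, -, h2⟩ := desStep_held hl hh hil hx
      refine ⟨o', h1, ?_, ?_, hjj', fun k hk => huniq k (held_eq_of_desStep hl hh hlt hk)⟩
      · rcases h2 with rfl | ⟨h2, -⟩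
        · exact hix
        · exact hix.trans h2.le
      · rcases h2 with rfl | ⟨-, h2⟩
        · exact hxj
        · exact h2.trans_lt hlt
    · have hhj := σ.injective heq
      subst hhj
      have hlj := huniq l hh
      subst hlj
      obtain ⟨h1, h2⟩ := desStep_designate hl hh hj hx hbj hxj
      right; left
      refine ⟨h1, fun k hk => ?_⟩
      by_contra hki
      rcases h2 k _ hki hk with ⟨h3, h4⟩ | h3
      · exact h4 (huniq k h3)
      · exact absurd hxj (not_lt.2 h3)
  · have hb := best_eq_of_mem hA hi (mem_remObjs.2 ⟨i, hij⟩)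
    have hc : σ (best (P i) (remObjs st)) ≤ σ j := by rw [hb]
    obtain ⟨l, hl⟩ := exists_leaver hij hc
    refine ⟨?_, Or.inr ⟨l, hl⟩⟩
    obtain ⟨h, hh, hmin⟩ := leaver_spec hl
    rcases (hmin i j hij hc).lt_or_eq with hlt | heq
    · right; left
      exact ⟨desStep_held_of_lt hl hh hlt hij,
        fun k hk => huniq k (held_eq_of_desStep hl hh hlt hk)⟩
    · have hhj := σ.injective heq
      subst hhj
      have hli := huniq l hh
      subst hli
      right; right
      exact ⟨desStep_held_leaver hl, by rw [desStep_res hl, hb]; simp⟩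
  · refine ⟨Or.inr (Or.inr ⟨desStep_held_none hnone, ?_⟩), Or.inl hnone⟩
    rcases hl : leaver σ P st with _ | l
    · simpa only [desStep, hl] using hres
    · obtain ⟨h, hh, -⟩ := leaver_spec hl
      have hil : i ≠ l := by
        rintro rfl
        simp [hnone] at hh
      rw [desStep_res hl, Function.update_of_ne hil, hres]

/-- The number of remaining agents bounds the number of steps after which `i` has left with `j`,
since every step before her departure removes an agent. -/
theorem desInv_iterate (hP : singlePeaked σ (P j))
    (hi : best (P i) (activeAgents P) = j) (hj : best (P j) (activeAgents P) = i) (m : ℕ) :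
    ∀ st : AlgState n, remObjs st ⊆ activeAgents P → DesInv σ i j st →
      (remAgents st).card ≤ m → ((desStep σ P)^[m] st).res i = some j := by
  induction m with
  | zero =>
    intro st _ hst hcard
    have hemp : remAgents st = ∅ := Finset.card_eq_zero.1 (Nat.le_zero.1 hcard)
    have hnone : ∀ o, st.held i ≠ some o := fun o ho => by
      have := mem_remAgents.2 ⟨o, ho⟩
      simp [hemp] at this
    rcases hst with ⟨x, hx, -⟩ | ⟨hx, -⟩ | ⟨-, h⟩
    · exact absurd hx (hnone _)
    · exact absurd hx (hnone _)
    · exact h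
  | succ m ih =>
    intro st hA hst hcard
    rw [Function.iterate_succ_apply]
    obtain ⟨h1, h2⟩ := desInv_desStep hP hA hi hj hst
    have hA' := (remObjs_desStep_subset (σ := σ) (P := P)).trans hA
    rcases hl : leaver σ P st with _ | l
    -- Without a leaver the state is stationary, and `i` is already gone.
    · have hstat : desStep σ P st = st := by simp only [desStep, hl]
      have hnone : st.held i = none := by simpa [hl] using h2
      rw [hstat, Function.iterate_fixed hstat]
      rcases hst with ⟨x, hx, -⟩ | ⟨hx, -⟩ | ⟨-, h⟩
      · simp [hnone] at hx
      · simp [hnone] at hx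
      · exact h
    · exact ih _ hA' h1 (by have := card_remAgents_desStep hl; omega)

theorem desInit_held {k o : Fin n} :
    (desInit P).held k = some o ↔ k ∈ activeAgents P ∧ k = o := by
  simp [desInit, activeAgents]

theorem designator_of_lt (hP : singlePeaked σ (P j))
    (hiA : i ∈ activeAgents P) (hjA : j ∈ activeAgents P)
    (hi : best (P i) (activeAgents P) = j) (hj : best (P j) (activeAgents P) = i)
    (hij : σ i < σ j) : designator σ P i = j := by
  have h := desInv_iterate (st := desInit P) hP hi hj n ?_ ?_ ?_
  · simp [designator, h]
  · intro o ho
    obtain ⟨k, hk⟩ := mem_remObjs.1 ho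
    obtain ⟨h1, rfl⟩ := desInit_held.1 hk
    exact h1
  · exact Or.inl ⟨i, desInit_held.2 ⟨hiA, rfl⟩, le_rfl, hij, desInit_held.2 ⟨hjA, rfl⟩,
      fun k hk => (desInit_held.1 hk).2⟩
  · simpa using Finset.card_le_univ (remAgents (desInit P))

end Invariant

theorem designator_equityBA (n : ℕ) [NeZero n] (hn : 4 ≤ n) (σ : Fin n ≃ Fin n) :
    ∀ P : Fin n → Pref n, inD (spDomain σ) P → ∀ i j, acclaimedPair P i j →
      (designator σ P i = j ∨ designator σ P j = i) ∧
      (σ i < σ j → designator σ P i = j) := by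
  rintro P hP i j ⟨Ni, Nj, hdisj, hun, -, -, hiN, hjN, hNi, hNj⟩
  have hiA : i ∈ activeAgents P := hun ▸ Finset.mem_union_right _ hiN
  have hjA : j ∈ activeAgents P := hun ▸ Finset.mem_union_left _ hjN
  have hbi := hNj i hiN
  have hbj := hNi j hjN
  have hne : i ≠ j := by
    rintro rfl
    exact Finset.disjoint_left.1 hdisj hjN hiN
  refine ⟨?_, designator_of_lt (hP j) hiA hjA hbi hbj⟩
  rcases lt_or_gt_of_ne (σ.injective.ne hne) with h | h
  · exact Or.inl (designator_of_lt (hP j) hiA hjA hbi hbj h)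
  · exact Or.inr (designator_of_lt (hP i) hjA hiA hbj hbi h)
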